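/- Let 2 ≤ d1 < d2 and let C be a positive semidefinite matrix on ℂ^{d1}⊗ℂ^{d2} with 4 ≤ rank(C) ≤ d2. Then there exists a unitary U on ℂ^{d1}⊗ℂ^{d2} such that for every diagonal matrix D on ℂ^{d1}⊗ℂ^{d2} whose diagonal entries are a permutation of the eigenvalues of C (with multiplicity), the vector λ(tr_1[UCU*]) ⊕ λ(tr_2[UCU*]) is NOT majorized by λ(tr_1[D]) ⊕ λ(tr_2[D]). -/

import Mathlib

open Matrix Finset Kronecker
open scoped ComplexOrder

/-- The first partial trace of a matrix on `ℂ^{d1} ⊗ ℂ^{d2}` (index pairs `(i,s)` ordered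
lexicographically): `(tr_1 C)_{s,t} = ∑_i C_{(i,s),(i,t)}`. -/
noncomputable def ptrace1 {d1 d2 : ℕ} (C : Matrix (Fin d1 × Fin d2) (Fin d1 × Fin d2) ℂ) :
    Matrix (Fin d2) (Fin d2) ℂ :=
  Matrix.of fun s t => ∑ i : Fin d1, C (i, s) (i, t)

/-- The second partial trace: `(tr_2 C)_{i,j} = ∑_s C_{(i,s),(j,s)}`. -/
noncomputable def ptrace2 {d1 d2 : ℕ} (C : Matrix (Fin d1 × Fin d2) (Fin d1 × Fin d2) ℂ) :
    Matrix (Fin d1) (Fin d1) ℂ :=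
  Matrix.of fun i j => ∑ s : Fin d2, C (i, s) (j, s)

/-- The sum of the `k` largest entries of the vector `x` (the largest value of a sum of `k`
entries of `x`), i.e. `∑_{i=1}^k x_i^↓`. -/
noncomputable def maxSum {ι : Type*} [Fintype ι] (x : ι → ℝ) (k : ℕ) : ℝ :=
  sSup {s : ℝ | ∃ A : Finset ι, A.card = k ∧ s = ∑ i ∈ A, x i}

/-- `x ≺ y` (majorization): for every `k`, the sum of the `k` largest entries of `x` is at
most the sum of the `k` largest entries of `y`, and the total sums are equal. -/
def Majorizes {ι κ : Type*} [Fintype ι] [Fintype κ] (x : ι → ℝ) (y : κ → ℝ) : Prop :=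
  (∀ k : ℕ, maxSum x k ≤ maxSum y k) ∧ ∑ i, x i = ∑ j, y j

/-- `x ≺_w y` (weak majorization). -/
def WeakMajorizes {ι κ : Type*} [Fintype ι] [Fintype κ] (x : ι → ℝ) (y : κ → ℝ) : Prop :=
  ∀ k : ℕ, maxSum x k ≤ maxSum y k

/-- Functions with the same multiset of values differ by a permutation. -/
lemma exists_perm_of_map_eq {ι : Type*} [Fintype ι] [DecidableEq ι] (x y : ι → ℝ)
    (h : Multiset.map x Finset.univ.val = Multiset.map y Finset.univ.val) :
    ∃ e : Equiv.Perm ι, x = y ∘ e := by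
  classical
  have hc : ∀ c : ℝ, Nonempty ({i // x i = c} ≃ {i // y i = c}) := by
    intro c
    rw [← Fintype.card_eq]
    have h2 := congrArg (Multiset.count c) h
    rw [Multiset.count_map, Multiset.count_map] at h2
    rw [Fintype.card_subtype, Fintype.card_subtype]
    simp only [Finset.card_def, Finset.filter_val]
    simpa only [eq_comm] using h2
  let f := fun c => (hc c).some
  refine ⟨Equiv.ofFiberEquiv f, ?_⟩
  funext i
  exact (Equiv.ofFiberEquiv_map f i).symm

/-- Eigenvalues of a real diagonal matrix. -/
lemma eigenvalues_of_diag {ι : Type*} [Fintype ι] [DecidableEq ι] (M : Matrix ι ι ℂ)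
    (hM : M.IsHermitian) (d : ι → ℝ) (h : M = Matrix.diagonal (fun i => (d i : ℂ))) :
    ∃ e : Equiv.Perm ι, hM.eigenvalues = d ∘ e := by
  apply exists_perm_of_map_eq
  have h1 := hM.roots_charpoly_eq_eigenvalues
  have h2 : M.charpoly.roots = Multiset.map (fun i => (d i : ℂ)) Finset.univ.val := by
    rw [h, Matrix.charpoly_diagonal, Polynomial.roots_prod]
    · simp
    · simp [Finset.prod_ne_zero_iff, Polynomial.X_sub_C_ne_zero]
  have h3 := congrArg (Multiset.map Complex.re) (h1.symm.trans h2)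
  simpa [Multiset.map_map, Function.comp_def] using h3

lemma le_maxSum {ι : Type*} [Fintype ι] (x : ι → ℝ) (k : ℕ) (A : Finset ι) (hA : A.card = k) :
    ∑ i ∈ A, x i ≤ maxSum x k := by
  apply le_csSup
  · apply Set.Finite.bddAbove
    apply (Set.finite_range (fun A : Finset ι => ∑ i ∈ A, x i)).subset
    rintro s ⟨A, -, rfl⟩
    exact ⟨A, rfl⟩
  · exact ⟨A, hA, rfl⟩

lemma maxSum_le {ι : Type*} [Fintype ι] (x : ι → ℝ) (k : ℕ) (b : ℝ) (hb : 0 ≤ b)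
    (h : ∀ A : Finset ι, A.card = k → ∑ i ∈ A, x i ≤ b) : maxSum x k ≤ b := by
  apply Real.sSup_le _ hb
  rintro s ⟨A, hA, rfl⟩
  exact h A hA

lemma maxSum_comp {ι : Type*} [Fintype ι] (x : ι → ℝ) (e : Equiv.Perm ι) (k : ℕ) :
    maxSum (x ∘ e) k = maxSum x k := by
  unfold maxSum
  congr 1
  ext s
  constructor
  · rintro ⟨A, hA, rfl⟩
    exact ⟨A.map e.toEmbedding, by simpa using hA, by simp⟩
  · rintro ⟨A, hA, rfl⟩
    exact ⟨A.map e.symm.toEmbedding, by simpa using hA, by simp⟩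

/-- The `k`-sum for a pair of diagonal partial traces. -/
lemma maxSum_eig {ι κ : Type*} [Fintype ι] [DecidableEq ι] [Fintype κ] [DecidableEq κ]
    (M : Matrix ι ι ℂ) (N : Matrix κ κ ℂ)
    (hM : M.IsHermitian) (hN : N.IsHermitian) (d : ι → ℝ) (d' : κ → ℝ)
    (h : M = Matrix.diagonal (fun i => (d i : ℂ)))
    (h' : N = Matrix.diagonal (fun i => (d' i : ℂ))) (k : ℕ) :
    maxSum (Sum.elim hM.eigenvalues hN.eigenvalues) k = maxSum (Sum.elim d d') k := by
  obtain ⟨e, he⟩ := eigenvalues_of_diag M hM d h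
  obtain ⟨e', he'⟩ := eigenvalues_of_diag N hN d' h'
  rw [he, he', ← maxSum_comp (Sum.elim d d') (Equiv.sumCongr e e')]
  congr 1
  funext i
  rcases i with i | i <;> simp

/-- Column sums and row sums of a grid. -/
noncomputable def gridSums {d1 d2 : ℕ} (δ : Fin d1 × Fin d2 → ℝ) : Fin d2 ⊕ Fin d1 → ℝ :=
  Sum.elim (fun s => ∑ i, δ (i, s)) (fun i => ∑ s, δ (i, s))

lemma sum_gridSums {d1 d2 : ℕ} (δ : Fin d1 × Fin d2 → ℝ) (B : Finset (Fin d2))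
    (A : Finset (Fin d1)) :
    ∑ z ∈ B.disjSum A, gridSums δ z =
      ∑ p, δ p * ((if p.1 ∈ A then 1 else 0) + (if p.2 ∈ B then 1 else 0)) := by
  rw [Finset.sum_disjSum]
  simp only [gridSums, Sum.elim_inl, Sum.elim_inr, mul_add, Finset.sum_add_distrib]
  rw [add_comm]
  congr 1
  · rw [Fintype.sum_prod_type]
    simp
  · rw [Fintype.sum_prod_type_right]
    simp

lemma sum_gridSums' {d1 d2 : ℕ} (δ : Fin d1 × Fin d2 → ℝ) (Z : Finset (Fin d2 ⊕ Fin d1)) :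
    ∃ (B : Finset (Fin d2)) (A : Finset (Fin d1)), B.card + A.card = Z.card ∧
    ∑ z ∈ Z, gridSums δ z =
      ∑ p, δ p * ((if p.1 ∈ A then 1 else 0) + (if p.2 ∈ B then 1 else 0)) := by
  refine ⟨Z.toLeft, Z.toRight, Finset.card_toLeft_add_card_toRight, ?_⟩
  rw [← sum_gridSums, Finset.toLeft_disjSum_toRight]

lemma bound_two {d1 d2 : ℕ} (δ : Fin d1 × Fin d2 → ℝ) (h0 : ∀ p, 0 ≤ δ p) (L m : ℝ)
    (hL : ∀ p, δ p ≤ L) (hm : ∀ p, δ p ≠ 0 → m ≤ δ p) (hmL : m ≤ L)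
    (hook : ∀ i s, ∃ q : Fin d1 × Fin d2, δ q ≠ 0 ∧ q.1 ≠ i ∧ q.2 ≠ s) :
    maxSum (gridSums δ) 2 ≤ ∑ p, δ p + L - m := by
  have hS : 0 ≤ ∑ p, δ p := Finset.sum_nonneg fun p _ => h0 p
  apply maxSum_le _ _ _ (by linarith)
  intro Z hZ
  obtain ⟨B, A, hc, hs⟩ := sum_gridSums' δ Z
  rw [hs]
  rw [hZ] at hc
  by_cases h1 : A.card = 1
  · have h2 : B.card = 1 := by omega
    obtain ⟨i, rfl⟩ := Finset.card_eq_one.1 h1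
    obtain ⟨s, rfl⟩ := Finset.card_eq_one.1 h2
    obtain ⟨q, hq, hqi, hqs⟩ := hook i s
    have : ∑ p, δ p * ((if p.1 ∈ ({i} : Finset (Fin d1)) then 1 else 0) +
        (if p.2 ∈ ({s} : Finset (Fin d2)) then 1 else 0)) ≤
        ∑ p, (δ p + (if p = (i, s) then δ p else 0) - (if p = q then δ p else 0)) := by
      apply Finset.sum_le_sum
      rintro ⟨j, t⟩ -
      have := h0 (j, t)
      by_cases hp : (j, t) = q
      · subst hp
        simp at hqi hqs
        simp [hqi, hqs]
      · by_cases hj : j = i <;> by_cases ht : t = s <;> simp [hj, ht, hp]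
        all_goals simp_all
        all_goals linarith
    refine this.trans ?_
    rw [Finset.sum_sub_distrib, Finset.sum_add_distrib]
    simp
    linarith [hL (i, s), hm q hq]
  · have : ∑ p, δ p * ((if p.1 ∈ A then 1 else 0) + (if p.2 ∈ B then 1 else 0)) ≤ ∑ p, δ p := by
      apply Finset.sum_le_sum
      rintro p -
      have := h0 p
      have hAB : A = ∅ ∨ B = ∅ := by
        rw [← Finset.card_eq_zero, ← Finset.card_eq_zero]; omega
      rcases hAB with rfl | rfl <;> simp <;> split_ifs <;> linarith
    linarith

lemma hook_card {d1 d2 : ℕ} (A : Finset (Fin d1)) (B : Finset (Fin d2)) (hc : B.card + A.card = 4)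
    (i : Fin d1) (s : Fin d2) :
    ((A ×ˢ B).filter (fun p => p.1 = i ∨ p.2 = s)).card ≤ 3 := by
  by_cases hi : i ∈ A
  · by_cases hs : s ∈ B
    · have hsub : (A ×ˢ B).filter (fun p => p.1 = i ∨ p.2 = s) ⊆
          ({i} ×ˢ B) ∪ ((A.erase i) ×ˢ {s}) := by
        rintro ⟨j, t⟩ h
        simp at h ⊢
        tauto
      have h1 := Finset.card_le_card hsub
      have h2 := Finset.card_union_le ({i} ×ˢ B) ((A.erase i) ×ˢ {s})
      rw [Finset.card_product, Finset.card_product, Finset.card_erase_of_mem hi,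
        Finset.card_singleton, Finset.card_singleton] at h2
      have : 0 < A.card := Finset.card_pos.2 ⟨i, hi⟩
      omega
    · have hsub : (A ×ˢ B).filter (fun p => p.1 = i ∨ p.2 = s) ⊆ ({i} ×ˢ B) := by
        rintro ⟨j, t⟩ h
        simp at h ⊢
        grind
      have h1 := Finset.card_le_card hsub
      simp [Finset.card_product] at h1
      have : 0 < A.card := Finset.card_pos.2 ⟨i, hi⟩
      omega
  · have hsub : (A ×ˢ B).filter (fun p => p.1 = i ∨ p.2 = s) ⊆ (A ×ˢ (B ∩ {s})) := by
      rintro ⟨j, t⟩ h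
      simp at h ⊢
      grind
    have h1 := Finset.card_le_card hsub
    by_cases hs : s ∈ B
    · have : 0 < B.card := Finset.card_pos.2 ⟨s, hs⟩
      have h3 : B ∩ {s} = {s} := by simpa using hs
      rw [h3] at h1
      simp [Finset.card_product] at h1
      omega
    · have h3 : B ∩ {s} = ∅ := by ext t; simp; grind
      rw [h3, Finset.product_empty, Finset.card_empty] at h1
      omega

lemma bound_four {d1 d2 : ℕ} (δ : Fin d1 × Fin d2 → ℝ) (h0 : ∀ p, 0 ≤ δ p) (L : ℝ) (hL0 : 0 ≤ L)
    (hL : ∀ T : Finset (Fin d1 × Fin d2), T.card ≤ 3 → ∑ p ∈ T, δ p ≤ L)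
    (i : Fin d1) (s : Fin d2) (hook : ∀ q : Fin d1 × Fin d2, δ q ≠ 0 → q.1 = i ∨ q.2 = s) :
    maxSum (gridSums δ) 4 ≤ ∑ p, δ p + L := by
  have hS : 0 ≤ ∑ p, δ p := Finset.sum_nonneg fun p _ => h0 p
  apply maxSum_le _ _ _ (by linarith)
  intro Z hZ
  obtain ⟨B, A, hc, hs⟩ := sum_gridSums' δ Z
  rw [hs]
  rw [hZ] at hc
  have h1 := hL _ (hook_card A B hc i s)
  have h2 : (A ×ˢ B).filter (fun p => p.1 = i ∨ p.2 = s) =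
      Finset.univ.filter (fun p => (p.1 ∈ A ∧ p.2 ∈ B) ∧ (p.1 = i ∨ p.2 = s)) := by
    ext p; simp
  rw [h2, Finset.sum_filter] at h1
  refine le_trans ?_ (add_le_add_right h1 _)
  rw [← Finset.sum_add_distrib]
  apply Finset.sum_le_sum
  rintro p -
  have hp := h0 p
  by_cases hz : δ p = 0
  · simp [hz]
  · have := hook p hz
    by_cases h1 : p.1 ∈ A <;> by_cases h2 : p.2 ∈ B <;> simp [h1, h2, this] <;> linarith

lemma sum_three {ι : Type*} [Fintype ι] [DecidableEq ι] (μ : ι → ℝ) (h0 : ∀ p, 0 ≤ μ p)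
    (p1 p2 p3 : ι) (h12 : p1 ≠ p2) (h13 : μ p3 ≤ μ p1) (h23 : μ p3 ≤ μ p2)
    (h : ∀ p, p ≠ p1 → p ≠ p2 → μ p ≤ μ p3) (T : Finset ι) (hT : T.card ≤ 3) :
    ∑ p ∈ T, μ p ≤ μ p1 + μ p2 + μ p3 := by
  set F : ι → ℝ := fun p => (if p = p1 then μ p1 - μ p3 else 0) +
    (if p = p2 then μ p2 - μ p3 else 0) with hF
  have hF0 : ∀ p, 0 ≤ F p := by
    intro p
    simp only [hF]
    split_ifs <;> linarith
  have e1 : ∑ p ∈ T, μ p ≤ ∑ p ∈ T, (F p + μ p3) := by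
    apply Finset.sum_le_sum
    intro p _
    have := h p
    simp only [hF]
    by_cases a : p = p1 <;> by_cases b : p = p2 <;> simp_all
  have e2 : ∑ p ∈ T, F p ≤ ∑ p, F p :=
    Finset.sum_le_sum_of_subset_of_nonneg (Finset.subset_univ _) fun p _ _ => hF0 p
  have e3 : ∑ p, F p = (μ p1 - μ p3) + (μ p2 - μ p3) := by
    simp [hF, Finset.sum_add_distrib]
  rw [Finset.sum_add_distrib, Finset.sum_const, nsmul_eq_mul] at e1
  have e4 : (T.card : ℝ) ≤ 3 := by exact_mod_cast hT
  nlinarith [h0 p3]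

/-- A bilinear expansion for a conjugated diagonal matrix by a Householder reflection. -/
lemma householder_entry {ι : Type*} [Fintype ι] [DecidableEq ι] (w μ : ι → ℝ) (p q : ι) :
    (((1 : Matrix ι ι ℝ) - (2 : ℝ) • vecMulVec w w) * diagonal μ *
      ((1 : Matrix ι ι ℝ) - (2 : ℝ) • vecMulVec w w)) p q =
    (if p = q then μ p else 0) - 2 * w p * w q * (μ p + μ q)
      + 4 * w p * w q * ∑ k, μ k * w k ^ 2 := by
  rw [Matrix.mul_apply]
  simp only [Matrix.mul_diagonal, Matrix.sub_apply, Matrix.smul_apply, Matrix.vecMulVec_apply,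
    smul_eq_mul, Matrix.one_apply]
  have : ∀ k, ((if p = k then (1 : ℝ) else 0) - 2 * (w p * w k)) * μ k *
      ((if k = q then 1 else 0) - 2 * (w k * w q)) =
      (if p = k then (if p = q then μ p else 0) - 2 * w p * w q * μ p else 0)
      - (if k = q then 2 * w p * w q * μ q else 0) + 4 * w p * w q * (μ k * w k ^ 2) := by
    intro k
    by_cases h1 : p = k
    · subst h1
      by_cases h2 : p = q
      · subst h2; simp; ring
      · simp [h2]; ring
    · by_cases h2 : k = q
      · subst h2; simp [h1]; ring
      · simp [h1, h2]; ring
  simp_rw [this]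
  rw [Finset.sum_add_distrib, Finset.sum_sub_distrib, ← Finset.mul_sum]
  simp
  ring

lemma householder_sq {ι : Type*} [Fintype ι] [DecidableEq ι] (w : ι → ℝ)
    (hw : ∑ k, w k ^ 2 = 1) :
    ((1 : Matrix ι ι ℝ) - (2 : ℝ) • vecMulVec w w) *
      ((1 : Matrix ι ι ℝ) - (2 : ℝ) • vecMulVec w w) = 1 := by
  ext p q
  have := householder_entry w (fun _ => 1) p q
  rw [Matrix.diagonal_one, mul_one] at this
  rw [this]
  simp only [one_mul, hw, Matrix.one_apply]
  ring

/-- Existence of a unitary conjugating a diagonal matrix into the desired form. -/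
lemma exists_conj {d1 d2 : ℕ} (μ : Fin d1 × Fin d2 → ℝ) (a b : Fin d1 × Fin d2)
    (h1 : a.1 ≠ b.1) (h2 : a.2 ≠ b.2) (hb : μ b = 0) (x : ℝ) (hx0 : 0 ≤ x) (hx1 : x ≤ 1) :
    ∃ R : Matrix (Fin d1 × Fin d2) (Fin d1 × Fin d2) ℂ,
      R ∈ Matrix.unitaryGroup (Fin d1 × Fin d2) ℂ ∧
      ∃ ν : Fin d1 × Fin d2 → ℝ,
        ν a = (1 - 4 * x * (1 - x)) * μ a ∧ ν b = 4 * x * (1 - x) * μ a ∧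
        (∀ p, p ≠ a → p ≠ b → ν p = μ p) ∧
        ptrace1 (R * diagonal (fun p => (μ p : ℂ)) * Rᴴ) =
          diagonal (fun s => ((∑ i, ν (i, s) : ℝ) : ℂ)) ∧
        ptrace2 (R * diagonal (fun p => (μ p : ℂ)) * Rᴴ) =
          diagonal (fun i => ((∑ s, ν (i, s) : ℝ) : ℂ)) := by
  have hab : a ≠ b := fun h => h1 (by rw [h])
  set w : Fin d1 × Fin d2 → ℝ := fun p => if p = a then √x else if p = b then √(1 - x) else 0
    with hw
  have hwa : w a = √x := by simp [hw]
  have hwb : w b = √(1 - x) := by simp [hw, hab.symm]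
  have hw0 : ∀ p, p ≠ a → p ≠ b → w p = 0 := by
    intro p ha hb; simp [hw, ha, hb]
  have hs1 : √x ^ 2 = x := Real.sq_sqrt hx0
  have hs2 : √(1 - x) ^ 2 = 1 - x := Real.sq_sqrt (by linarith)
  have hsum : ∀ f : Fin d1 × Fin d2 → ℝ, ∑ k, f k * w k ^ 2 = f a * x + f b * (1 - x) := by
    intro f
    rw [Finset.sum_eq_add_of_mem a b (Finset.mem_univ _) (Finset.mem_univ _) hab]
    · rw [hwa, hwb, hs1, hs2]
    · rintro c - ⟨hc1, hc2⟩
      rw [hw0 c hc1 hc2]; simp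
  have hw1 : ∑ k, w k ^ 2 = 1 := by
    have := hsum (fun _ => 1)
    simpa using this
  set R0 : Matrix (Fin d1 × Fin d2) (Fin d1 × Fin d2) ℝ := 1 - (2 : ℝ) • vecMulVec w w with hR0
  have hR0t : R0ᵀ = R0 := by
    rw [hR0]; ext p q
    simp [Matrix.vecMulVec_apply, Matrix.one_apply, eq_comm, mul_comm]
  set R : Matrix (Fin d1 × Fin d2) (Fin d1 × Fin d2) ℂ := R0.map Complex.ofRealHom with hR
  have hRH : Rᴴ = R := by
    ext p q
    have := congrFun (congrFun hR0t p) q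
    simp only [Matrix.transpose_apply] at this
    simp [hR, this]
  have hRR : R * R = 1 := by
    rw [hR, ← Matrix.map_mul, hR0, householder_sq w hw1]
    simp
  have hE : ∀ p q, (R * diagonal (fun p => (μ p : ℂ)) * Rᴴ) p q =
      (((if p = q then μ p else 0) - 2 * w p * w q * (μ p + μ q)
      + 4 * w p * w q * ∑ k, μ k * w k ^ 2 : ℝ) : ℂ) := by
    intro p q
    rw [← householder_entry, hRH, ← hR0]
    have : (diagonal (fun p => (μ p : ℂ)) : Matrix (Fin d1 × Fin d2) (Fin d1 × Fin d2) ℂ) =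
        (diagonal μ).map Complex.ofRealHom := by
      rw [Matrix.diagonal_map (by simp)]; rfl
    rw [this, hR, ← Matrix.map_mul, ← Matrix.map_mul]
    rfl
  have hoff : ∀ p q : Fin d1 × Fin d2, p ≠ q → (p.1 = q.1 ∨ p.2 = q.2) → w p * w q = 0 := by
    intro p q hpq h
    by_contra hne
    have hp : w p ≠ 0 := left_ne_zero_of_mul hne
    have hq : w q ≠ 0 := right_ne_zero_of_mul hne
    have hp' : p = a ∨ p = b := by
      by_contra hh; push Not at hh; exact hp (hw0 p hh.1 hh.2)
    have hq' : q = a ∨ q = b := by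
      by_contra hh; push Not at hh; exact hq (hw0 q hh.1 hh.2)
    rcases hp' with rfl | rfl <;> rcases hq' with rfl | rfl
    · exact hpq rfl
    · exact h.elim h1 h2
    · exact h.elim (fun e => h1 e.symm) (fun e => h2 e.symm)
    · exact hpq rfl
  set ν : Fin d1 × Fin d2 → ℝ := fun p => μ p - 2 * w p * w p * (μ p + μ p)
      + 4 * w p * w p * ∑ k, μ k * w k ^ 2 with hν
  have hE2 : ∀ p q : Fin d1 × Fin d2, (p.1 = q.1 ∨ p.2 = q.2) →
      (R * diagonal (fun p => (μ p : ℂ)) * Rᴴ) p q = if p = q then (ν p : ℂ) else 0 := by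
    intro p q h
    rw [hE]
    by_cases hpq : p = q
    · subst hpq
      simp [hν]
    · have := hoff p q hpq h
      rw [if_neg hpq, if_neg hpq, mul_assoc 2, mul_assoc 4, this]
      simp
  refine ⟨R, ?_, ν, ?_, ?_, ?_, ?_, ?_⟩
  · rw [Matrix.mem_unitaryGroup_iff, Matrix.star_eq_conjTranspose, hRH, hRR]
  · simp only [hν, hsum, hb, hwa]
    linear_combination (-4 * μ a + 4 * μ a * x) * hs1
  · simp only [hν, hsum, hb, hwb]
    linear_combination (4 * μ a * x) * hs2
  · intro p ha hb
    simp [hν, hw0 p ha hb]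
  · ext s t
    simp only [ptrace1, Matrix.of_apply]
    rw [Finset.sum_congr rfl fun i _ => hE2 (i, s) (i, t) (Or.inl rfl)]
    by_cases hst : s = t
    · subst hst; simp
    · simp [hst]
  · ext i j
    simp only [ptrace2, Matrix.of_apply]
    rw [Finset.sum_congr rfl fun s _ => hE2 (i, s) (j, s) (Or.inr rfl)]
    by_cases hst : i = j
    · subst hst; simp
    · simp [hst]

lemma antitone_support {N : ℕ} (f : Fin N → ℝ) (hf : Antitone f) (h0 : ∀ k, 0 ≤ f k) (r : ℕ)
    (hr : Fintype.card {i // f i ≠ 0} = r) (k : Fin N) : f k ≠ 0 ↔ (k : ℕ) < r := by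
  rw [Fintype.card_subtype] at hr
  constructor
  · intro hk
    have hsub : Finset.Iic k ⊆ Finset.univ.filter (fun i => f i ≠ 0) := by
      intro j hj
      simp only [Finset.mem_Iic] at hj
      simp only [Finset.mem_filter, Finset.mem_univ, true_and]
      have h1 := hf hj
      have h2 := lt_of_le_of_ne (h0 k) hk.symm
      linarith
    have := Finset.card_le_card hsub
    rw [Fin.card_Iic] at this
    omega
  · intro hk hz
    have hsub : Finset.univ.filter (fun i => f i ≠ 0) ⊆ Finset.Iio k := by
      intro j hj
      simp only [Finset.mem_filter, Finset.mem_univ, true_and] at hj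
      simp only [Finset.mem_Iio]
      by_contra hjk
      push Not at hjk
      have h1 := hf hjk
      exact hj (le_antisymm (by linarith) (h0 j))
    have := Finset.card_le_card hsub
    rw [Fin.card_Iio] at this
    omega

lemma exists_arrangement {d1 d2 : ℕ} (hd1 : 2 ≤ d1) (r : ℕ)
    (C : Matrix (Fin d1 × Fin d2) (Fin d1 × Fin d2) ℂ) (hC : C.PosSemidef)
    (hrank : C.rank = r) (hr4 : 4 ≤ r) (hrd : r ≤ d2) (i0 i1 : Fin d1) (s0 s1 s3 : Fin d2)
    (hi0 : (i0 : ℕ) = 0) (hi1 : (i1 : ℕ) = 1) (hs0 : (s0 : ℕ) = 0) (hs1 : (s1 : ℕ) = 1)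
    (hs3 : (s3 : ℕ) = 3) :
    ∃ (e : Equiv.Perm (Fin d1 × Fin d2)) (m : ℝ), 0 < m ∧
      ∀ μ : Fin d1 × Fin d2 → ℝ, μ = hC.1.eigenvalues ∘ e →
      (∀ p, 0 ≤ μ p) ∧ (∀ p, μ p ≠ 0 → m ≤ μ p) ∧ μ (i0, s3) ≠ 0 ∧
      (∀ p, μ p ≠ 0 → p.1 = i0 ∨ p = (i1, s0)) ∧ (∀ p, μ p ≤ μ (i0, s0)) ∧
      μ (i1, s0) ≤ μ (i0, s1) ∧
      (∀ p, p ≠ (i0, s0) → p ≠ (i0, s1) → μ p ≤ μ (i1, s0)) := by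
  set N := Fintype.card (Fin d1 × Fin d2) with hN
  have hN' : d1 * d2 = N := by simp [hN]
  set E : Fin N ≃ Fin d1 × Fin d2 := Fintype.equivOfCardEq (Fintype.card_fin _) with hE
  set f : Fin N → ℝ := hC.1.eigenvalues₀ with hf
  have hfE : ∀ p, hC.1.eigenvalues p = f (E.symm p) := fun p => rfl
  have hanti : Antitone f := hC.1.eigenvalues₀_antitone
  have hf0 : ∀ k, 0 ≤ f k := by
    intro k
    have := hC.eigenvalues_nonneg (E k)
    rwa [hfE, E.symm_apply_apply] at this
  have hcard : Fintype.card {k // f k ≠ 0} = r := by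
    rw [← hrank, hC.1.rank_eq_card_non_zero_eigs]
    apply Fintype.card_congr
    refine E.subtypeEquiv ?_
    intro k
    rw [hfE, E.symm_apply_apply]
  have hsupp := antitone_support f hanti hf0 r hcard
  let s2 : Fin d2 := ⟨2, by omega⟩
  have hNr : 2 * d2 ≤ N := by rw [← hN']; exact Nat.mul_le_mul_right _ hd1
  let τ : Fin d1 × Fin d2 ≃ Fin N :=
    (Equiv.swap (i1, s0) (i0, s2)).trans (finProdFinEquiv.trans (finCongr hN'))
  have hτ0 : ∀ s : Fin d2, s ≠ s2 → (τ (i0, s) : ℕ) = s := by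
    intro s hs
    have : Equiv.swap (i1, s0) (i0, s2) (i0, s) = (i0, s) := by
      apply Equiv.swap_apply_of_ne_of_ne
      · intro h; rw [Prod.mk.injEq] at h; have := h.1; rw [Fin.ext_iff] at this; omega
      · intro h; rw [Prod.mk.injEq] at h; exact hs h.2
    simp [τ, this, finProdFinEquiv, hi0]
  have hτ1 : (τ (i1, s0) : ℕ) = 2 := by
    simp [τ, finProdFinEquiv, hi0, s2]
  have hτ2 : ∀ p : Fin d1 × Fin d2, (τ p : ℕ) < d2 → p.1 = i0 ∨ p = (i1, s0) := by
    intro p hp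
    by_contra hh
    push Not at hh
    have hsw : Equiv.swap (i1, s0) (i0, s2) p = p := by
      apply Equiv.swap_apply_of_ne_of_ne hh.2
      intro h; exact hh.1 (by rw [h])
    have h1 : (p.1 : ℕ) ≠ 0 := by
      intro h; exact hh.1 (Fin.ext (by omega))
    simp [τ, hsw, finProdFinEquiv] at hp
    have : d2 * 1 ≤ d2 * (p.1 : ℕ) := Nat.mul_le_mul_left _ (by omega)
    omega
  have hr0 : r - 1 < N := by omega
  refine ⟨τ.trans E, f ⟨r - 1, hr0⟩, ?_, ?_⟩
  · have := (hsupp ⟨r - 1, hr0⟩).2 (by simp; omega)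
    exact lt_of_le_of_ne (hf0 _) this.symm
  · rintro μ hμ
    have hμf : ∀ p, μ p = f (τ p) := by
      intro p; rw [hμ]; simp [hfE]
    have e0 : (τ (i0, s0) : ℕ) = 0 := by
      rw [hτ0 _ (by intro h; rw [Fin.ext_iff] at h; simp [s2] at h; omega)]; exact hs0
    have e1 : (τ (i0, s1) : ℕ) = 1 := by
      rw [hτ0 _ (by intro h; rw [Fin.ext_iff] at h; simp [s2] at h; omega)]; exact hs1
    have e3 : (τ (i0, s3) : ℕ) = 3 := by
      rw [hτ0 _ (by intro h; rw [Fin.ext_iff] at h; simp [s2] at h; omega)]; exact hs3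
    simp only [hμf]
    refine ⟨fun p => hf0 _, ?_, ?_, ?_, ?_, ?_, ?_⟩
    · intro p hp
      apply hanti
      rw [Fin.le_def]
      have := (hsupp _).1 hp
      simp; omega
    · rw [hsupp]; omega
    · intro p hp
      apply hτ2
      have := (hsupp _).1 hp
      omega
    · intro p
      apply hanti; rw [Fin.le_def]; omega
    · apply hanti; rw [Fin.le_def]; omega
    · intro p hp0 hp1
      apply hanti; rw [Fin.le_def]
      have n0 : (τ p : ℕ) ≠ 0 := fun h => hp0 (τ.injective (Fin.ext (by omega)))
      have n1 : (τ p : ℕ) ≠ 1 := fun h => hp1 (τ.injective (Fin.ext (by omega)))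
      omega

lemma lower_bounds {d1 d2 : ℕ} (μ ν : Fin d1 × Fin d2 → ℝ) (i0 i1 : Fin d1) (s0 s1 s3 : Fin d2)
    (hi : i0 ≠ i1) (h01 : s0 ≠ s1) (h03 : s0 ≠ s3) (h13 : s1 ≠ s3) (t : ℝ) (ht0 : 0 ≤ t)
    (ht1 : t ≤ 1) (hμ0 : ∀ p, 0 ≤ μ p)
    (hook : ∀ p, μ p ≠ 0 → p.1 = i0 ∨ p = (i1, s0))
    (ha : ν (i0, s3) = (1 - t) * μ (i0, s3)) (hb : ν (i1, s1) = t * μ (i0, s3))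
    (hν : ∀ p, p ≠ (i0, s3) → p ≠ (i1, s1) → ν p = μ p) :
    ∑ p, μ p + μ (i0, s0) - t * μ (i0, s3) ≤ maxSum (gridSums ν) 2 ∧
    ∑ p, μ p + μ (i0, s0) + μ (i0, s1) + μ (i1, s0) + t * μ (i0, s3)
      ≤ maxSum (gridSums ν) 4 := by
  have hμb : μ (i1, s1) = 0 := by
    by_contra h
    rcases hook _ h with h | h
    · exact hi h.symm
    · exact h01 (Prod.ext_iff.1 h).2.symm
  have hν0 : ∀ p, 0 ≤ ν p := by
    intro p
    by_cases h1 : p = (i0, s3)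
    · rw [h1, ha]; exact mul_nonneg (by linarith) (hμ0 _)
    · by_cases h2 : p = (i1, s1)
      · rw [h2, hb]; exact mul_nonneg ht0 (hμ0 _)
      · rw [hν p h1 h2]; exact hμ0 p
  have hsum : ∑ p, ν p = ∑ p, μ p := by
    have : ∀ p, ν p = μ p - (if p = (i0, s3) then t * μ (i0, s3) else 0)
        + (if p = (i1, s1) then t * μ (i0, s3) else 0) := by
      intro p
      by_cases h1 : p = (i0, s3)
      · rw [h1, ha]; simp [hi]; ring
      · by_cases h2 : p = (i1, s1)
        · rw [h2, hb]; simp [hi.symm, hμb]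
        · rw [hν p h1 h2]; simp [h1, h2]
    rw [Finset.sum_congr rfl fun p _ => this p, Finset.sum_add_distrib, Finset.sum_sub_distrib]
    simp
  have hνs : ∀ p, ν p ≠ 0 → p.1 = i0 ∨ p = (i1, s0) ∨ p = (i1, s1) := by
    intro p hp
    by_cases h1 : p = (i0, s3)
    · left; rw [h1]
    · by_cases h2 : p = (i1, s1)
      · right; right; exact h2
      · rw [hν p h1 h2] at hp
        rcases hook p hp with h | h
        · left; exact h
        · right; left; exact h
  have v00 : ν (i0, s0) = μ (i0, s0) := hν _ (by simp [h03]) (by simp [hi])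
  have v01 : ν (i0, s1) = μ (i0, s1) := hν _ (by simp [h13]) (by simp [hi])
  have v10 : ν (i1, s0) = μ (i1, s0) := hν _ (by simp [hi.symm]) (by simp [h01])
  rw [← hsum, ← v00, ← v01, ← v10, ← hb]
  constructor
  · refine le_trans ?_ (le_maxSum (gridSums ν) 2 (Finset.disjSum {s0} {i0}) (by simp))
    rw [sum_gridSums]
    have : ∑ p, ν p + ν (i0, s0) - ν (i1, s1) =
        ∑ p, (ν p + (if p = (i0, s0) then ν p else 0) - (if p = (i1, s1) then ν p else 0)) := by
      rw [Finset.sum_sub_distrib, Finset.sum_add_distrib]; simp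
    rw [this]
    apply Finset.sum_le_sum
    rintro p -
    by_cases hz : ν p = 0
    · simp [hz]
    · have hp := hν0 p
      rcases hνs p hz with h | h | h
      · obtain ⟨i, s⟩ := p
        simp only at h
        subst h
        by_cases hs : s = s0
        · subst hs; simp [hi]; linarith
        · simp [hi, hs]
      · subst h; simp [hi.symm, h01]
      · subst h; simp [hi.symm, h01.symm]
  · refine le_trans ?_ (le_maxSum (gridSums ν) 4 (Finset.disjSum {s0, s1} {i0, i1})
      (by simp [hi, h01]))
    rw [sum_gridSums]
    have : ∑ p, ν p + ν (i0, s0) + ν (i0, s1) + ν (i1, s0) + ν (i1, s1) =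
        ∑ p, (ν p + (if p = (i0, s0) then ν p else 0) + (if p = (i0, s1) then ν p else 0)
          + (if p = (i1, s0) then ν p else 0) + (if p = (i1, s1) then ν p else 0)) := by
      simp [Finset.sum_add_distrib]
    rw [this]
    apply Finset.sum_le_sum
    rintro p -
    by_cases hz : ν p = 0
    · simp [hz]
    · have hp := hν0 p
      rcases hνs p hz with h | h | h
      · obtain ⟨i, s⟩ := p
        simp only at h
        subst h
        by_cases hs : s = s0
        · subst hs; simp [hi, h01]; linarith
        · by_cases hs1 : s = s1
          · subst hs1; simp [hi, h01.symm]; linarith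
          · simp [hi, hs, hs1]
      · subst h; simp [hi.symm, h01]; linarith
      · subst h; simp [hi.symm, h01.symm]; linarith

theorem low_rank_no_diagonal_majorization (d1 d2 : ℕ) (hd1 : 2 ≤ d1) (hdd : d1 < d2)
    (C : Matrix (Fin d1 × Fin d2) (Fin d1 × Fin d2) ℂ) (hC : C.PosSemidef)
    (hr4 : 4 ≤ C.rank) (hrd2 : C.rank ≤ d2) :
    ∃ U : Matrix (Fin d1 × Fin d2) (Fin d1 × Fin d2) ℂ,
      U ∈ Matrix.unitaryGroup (Fin d1 × Fin d2) ℂ ∧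
      ∀ D : Matrix (Fin d1 × Fin d2) (Fin d1 × Fin d2) ℂ, D.IsDiag →
        (∃ g : Equiv.Perm (Fin d1 × Fin d2), ∀ p, D p p = (hC.1.eigenvalues (g p) : ℂ)) →
        ∀ (hU1 : (ptrace1 (U * C * Uᴴ)).IsHermitian)
          (hU2 : (ptrace2 (U * C * Uᴴ)).IsHermitian)
          (hD1 : (ptrace1 D).IsHermitian) (hD2 : (ptrace2 D).IsHermitian),
          ¬ Majorizes (Sum.elim hU1.eigenvalues hU2.eigenvalues)
              (Sum.elim hD1.eigenvalues hD2.eigenvalues) := by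
  have hd2 : 4 ≤ d2 := hr4.trans hrd2
  let i0 : Fin d1 := ⟨0, by omega⟩
  let i1 : Fin d1 := ⟨1, by omega⟩
  let s0 : Fin d2 := ⟨0, by omega⟩
  let s1 : Fin d2 := ⟨1, by omega⟩
  let s3 : Fin d2 := ⟨3, by omega⟩
  have hi : i0 ≠ i1 := by simp [i0, i1]
  have h01 : s0 ≠ s1 := by simp [s0, s1]
  have h03 : s0 ≠ s3 := by simp [s0, s3]
  have h13 : s1 ≠ s3 := by simp [s1, s3]
  obtain ⟨e, m, hm, hμ⟩ := exists_arrangement hd1 C.rank C hC rfl hr4 hrd2 i0 i1 s0 s1 s3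
    rfl rfl rfl rfl rfl
  set μ : Fin d1 × Fin d2 → ℝ := hC.1.eigenvalues ∘ e with hμdef
  obtain ⟨hμ0, hμm, hμa, hhook, hμ1, hμ23, hμ3⟩ := hμ μ rfl
  have hapos : 0 < μ (i0, s3) := lt_of_le_of_ne (hμ0 _) hμa.symm
  have hma : m ≤ μ (i0, s3) := hμm _ hμa
  have hmL : m ≤ μ (i0, s0) := hma.trans (hμ1 _)
  have hμb : μ (i1, s1) = 0 := by
    by_contra h
    rcases hhook _ h with h | h
    · exact hi h.symm
    · exact h01 (Prod.ext_iff.1 h).2.symm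
  set x : ℝ := m / (8 * μ (i0, s3)) with hx
  have hxe : x * μ (i0, s3) = m / 8 := by rw [hx]; field_simp
  have hx0 : 0 < x := by positivity
  have hx1 : x ≤ 1 / 8 := by
    rw [hx, div_le_iff₀ (by positivity)]; linarith
  obtain ⟨R, hR, ν, hνa, hνb, hν, hp1, hp2⟩ := exists_conj μ (i0, s3) (i1, s1) hi h13.symm hμb x
    hx0.le (by linarith)
  have ht0 : 0 < 4 * x * (1 - x) := by
    have : 0 < 1 - x := by linarith
    positivity
  obtain ⟨hlow2, hlow4⟩ := lower_bounds μ ν i0 i1 s0 s1 s3 hi h01 h03 h13 (4 * x * (1 - x))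
    ht0.le (by nlinarith) hμ0 hhook hνa hνb hν
  -- the unitary
  set V : Matrix (Fin d1 × Fin d2) (Fin d1 × Fin d2) ℂ :=
    (hC.1.eigenvectorUnitary : Matrix (Fin d1 × Fin d2) (Fin d1 × Fin d2) ℂ) with hV
  have hVV : Vᴴ * V = 1 := by
    have := (Matrix.mem_unitaryGroup_iff'.1 hC.1.eigenvectorUnitary.2)
    rwa [Matrix.star_eq_conjTranspose] at this
  have hVV' : V * Vᴴ = 1 := mul_eq_one_comm.1 hVV
  have hspec : C = V * diagonal (fun p => (hC.1.eigenvalues p : ℂ)) * Vᴴ := by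
    have := hC.1.spectral_theorem
    rw [Unitary.conjStarAlgAut_apply] at this
    exact this
  set W : Matrix (Fin d1 × Fin d2) (Fin d1 × Fin d2) ℂ := Vᴴ.submatrix e id with hW
  have hWH : Wᴴ = V.submatrix id e := by
    rw [hW, Matrix.conjTranspose_submatrix, Matrix.conjTranspose_conjTranspose]
  have hWW : W * Wᴴ = 1 := by
    rw [hWH, hW, ← Matrix.submatrix_mul _ _ _ _ _ Function.bijective_id, hVV]
    exact Matrix.submatrix_one_equiv e
  have hWC : W * C * Wᴴ = diagonal (fun p => (μ p : ℂ)) := by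
    have h1 : Vᴴ * C * V = diagonal (fun p => (hC.1.eigenvalues p : ℂ)) := by
      conv_lhs => rw [hspec]
      calc Vᴴ * (V * diagonal (fun p => (hC.1.eigenvalues p : ℂ)) * Vᴴ) * V
          = (Vᴴ * V) * diagonal (fun p => (hC.1.eigenvalues p : ℂ)) * (Vᴴ * V) := by
            simp only [Matrix.mul_assoc]
        _ = _ := by rw [hVV, one_mul, mul_one]
    have h2 : W * C * Wᴴ = (Vᴴ * C * V).submatrix e e := by
      rw [hWH, hW]
      rw [Matrix.submatrix_mul (Vᴴ * C) V e id e Function.bijective_id,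
        Matrix.submatrix_mul Vᴴ C e id id Function.bijective_id, Matrix.submatrix_id_id]
    rw [h2, h1, Matrix.submatrix_diagonal_equiv]
    rfl
  refine ⟨R * W, ?_, ?_⟩
  · apply mul_mem hR
    rw [Matrix.mem_unitaryGroup_iff, Matrix.star_eq_conjTranspose, hWW]
  intro D hD ⟨g, hg⟩ hU1 hU2 hD1 hD2 hmaj
  have hM : R * W * C * (R * W)ᴴ = R * diagonal (fun p => (μ p : ℂ)) * Rᴴ := by
    rw [← hWC, Matrix.conjTranspose_mul]; simp only [Matrix.mul_assoc]
  -- the competitor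
  set δ : Fin d1 × Fin d2 → ℝ := fun p => hC.1.eigenvalues (g p) with hδ
  have hδμ : ∀ p, δ p = μ ((g.trans e.symm) p) := by
    intro p; simp [hδ, hμdef]
  have hDe : ∀ p q, D p q = if p = q then (δ p : ℂ) else 0 := by
    intro p q
    by_cases h : p = q
    · subst h; simp [hg, hδ]
    · rw [if_neg h]; exact hD h
  have hq1 : ptrace1 D = diagonal (fun s => ((∑ i, δ (i, s) : ℝ) : ℂ)) := by
    ext s t
    simp only [ptrace1, Matrix.of_apply, hDe]
    by_cases hst : s = t
    · subst hst; simp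
    · simp [hst]
  have hq2 : ptrace2 D = diagonal (fun i => ((∑ s, δ (i, s) : ℝ) : ℂ)) := by
    ext i j
    simp only [ptrace2, Matrix.of_apply, hDe]
    by_cases hst : i = j
    · subst hst; simp
    · simp [hst]
  have hle : ∀ k, maxSum (gridSums ν) k ≤ maxSum (gridSums δ) k := by
    intro k
    have := hmaj.1 k
    rw [maxSum_eig _ _ hU1 hU2 _ _ (by rw [hM]; exact hp1) (by rw [hM]; exact hp2),
      maxSum_eig _ _ hD1 hD2 _ _ hq1 hq2] at this
    exact this
  have hδsum : ∑ p, δ p = ∑ p, μ p := by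
    rw [Finset.sum_congr rfl fun p _ => hδμ p]
    exact Equiv.sum_comp (g.trans e.symm) μ
  have hδ0 : ∀ p, 0 ≤ δ p := fun p => by rw [hδμ]; exact hμ0 _
  by_cases hk : ∃ i s, ∀ q : Fin d1 × Fin d2, δ q ≠ 0 → q.1 = i ∨ q.2 = s
  · obtain ⟨i, s, hk⟩ := hk
    have h3 : μ (i1, s0) ≤ μ (i0, s0) := hμ1 _
    have := bound_four δ hδ0 (μ (i0, s0) + μ (i0, s1) + μ (i1, s0))
      (by linarith [hμ0 (i0, s0), hμ0 (i0, s1), hμ0 (i1, s0)]) (by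
        intro T hT
        have := sum_three μ hμ0 (i0, s0) (i0, s1) (i1, s0) (by simp [h01]) h3 hμ23 hμ3
          (T.map (g.trans e.symm).toEmbedding) (by simpa using hT)
        rw [Finset.sum_map] at this
        rw [Finset.sum_congr rfl fun p _ => hδμ p]
        exact this) i s hk
    have h4 := hle 4
    have : 0 < 4 * x * (1 - x) * μ (i0, s3) := mul_pos ht0 hapos
    linarith
  · push Not at hk
    have := bound_two δ hδ0 (μ (i0, s0)) m (fun p => by rw [hδμ]; exact hμ1 _)
      (fun p hp => by rw [hδμ] at hp ⊢; exact hμm _ hp) hmL hk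
    have h2 := hle 2
    have : 4 * x * (1 - x) * μ (i0, s3) < m := by
      have : 4 * x * (1 - x) * μ (i0, s3) = 4 * (x * μ (i0, s3)) * (1 - x) := by ring
      rw [this, hxe]
      nlinarith
    linarith
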